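/- arXiv:math/0411004 — 3 statements merged into one kernel-verified Lean document; each statement's English description precedes it below -/
import Mathlib

section
/- Let (M, d) be a metric space, C > 0, f : M → ℝ a C-Lipschitz function, E ⊆ M, and α > 1. Let 𝒜 be an at most countable family of nonempty bounded subsets of M covering E, for A ∈ 𝒜 let I(A) be the smallest closed interval in ℝ containing f(A), and define h(t) = Σ_{A ∈ 𝒜} (diam A)^{α−1} · χ_{I(A)}(t). Then for every t ∈ ℝ, the level set E_t = {x ∈ E : f(x) = t} satisfies μ^{α−1}(E_t) ≤ h(t); moreover, if ε > 0 and every A ∈ 𝒜 has diameter less than ε, then ℋ^{α−1}_ε(E_t) ≤ h(t) for every t ∈ ℝ. -/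
open ENNReal

/-- The `α`-dimensional Hausdorff content of a set `E` in a metric space: the infimum of
`∑ (diam A)^α` over all at most countable families of subsets covering `E` (with the
convention that an unbounded set has diameter `+∞`). -/
noncomputable def hausdorffContent {M : Type*} [MetricSpace M] (α : ℝ) (E : Set M) : ℝ≥0∞ :=
  ⨅ (A : ℕ → Set M) (_ : E ⊆ ⋃ n, A n), ∑' n, EMetric.diam (A n) ^ α

/-- `ℋ^α_ε(E)`: the infimum of `∑ (diam A)^α` over all at most countable coverings of `E` by
sets of diameter less than `ε` (equal to `+∞` if no such covering exists). -/
noncomputable def hausdorffPre {M : Type*} [MetricSpace M] (α ε : ℝ) (E : Set M) : ℝ≥0∞ :=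
  ⨅ (A : ℕ → Set M) (_ : E ⊆ ⋃ n, A n)
    (_ : ∀ n, EMetric.diam (A n) < ENNReal.ofReal ε), ∑' n, EMetric.diam (A n) ^ α

/-!
A point of the level set `E_t` lying in `A` has `t = f x ∈ f(A) ⊆ I(A)`, so the members `A` of the
cover with `t ∈ I(A)` already cover `E_t`, and `h(t)` is exactly the sum of their `(diam A)^(α-1)`.
Here `f(A) ⊆ I(A)` because a Lipschitz function maps bounded sets to bounded sets.
-/

section CountableCover

variable {M ι : Type*} [MetricSpace M] [Countable ι] {β : ℝ}

-- Enumerate the family, padding it with `∅`; this is free because `0 ^ β = 0`.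
lemma exists_nat_iUnion_eq_tsum_ediam_rpow_eq (hβ : 0 < β) (A : ι → Set M) :
    ∃ B : ℕ → Set M, ⋃ n, B n = ⋃ i, A i ∧ (∀ n, B n = ∅ ∨ ∃ i, B n = A i) ∧
      ∑' n, Metric.ediam (B n) ^ β = ∑' i, Metric.ediam (A i) ^ β := by
  obtain ⟨_⟩ := nonempty_encodable ι
  refine ⟨fun n => ⋃ i ∈ Encodable.decode₂ ι n, A i, Encodable.iUnion_decode₂ A, fun n => ?_, ?_⟩
  · exact Encodable.iUnion_decode₂_cases (C := fun s => s = ∅ ∨ ∃ i, s = A i)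
      (Or.inl rfl) fun i => Or.inr ⟨i, rfl⟩
  · exact tsum_iUnion_decode₂ (fun s : Set M => Metric.ediam s ^ β) (by simp [hβ]) A

variable {E : Set M} {A : ι → Set M}

lemma hausdorffContent_le_tsum (hβ : 0 < β) (hcover : E ⊆ ⋃ i, A i) :
    hausdorffContent β E ≤ ∑' i, Metric.ediam (A i) ^ β := by
  obtain ⟨B, hBA, -, hsum⟩ := exists_nat_iUnion_eq_tsum_ediam_rpow_eq hβ A
  rw [← hsum]
  exact iInf₂_le B (hcover.trans_eq hBA.symm)

lemma hausdorffPre_le_tsum {ε : ℝ} (hβ : 0 < β) (hε : 0 < ε) (hcover : E ⊆ ⋃ i, A i)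
    (hdiam : ∀ i, Metric.ediam (A i) < ENNReal.ofReal ε) :
    hausdorffPre β ε E ≤ ∑' i, Metric.ediam (A i) ^ β := by
  obtain ⟨B, hBA, hB, hsum⟩ := exists_nat_iUnion_eq_tsum_ediam_rpow_eq hβ A
  have hdiamB (n : ℕ) : Metric.ediam (B n) < ENNReal.ofReal ε := by
    rcases hB n with hempty | ⟨i, hi⟩
    · simpa [hempty] using hε
    · exact hi ▸ hdiam i
  rw [← hsum]
  exact (iInf₂_le B (hcover.trans_eq hBA.symm)).trans (iInf_le _ hdiamB)

end CountableCover

section LevelSet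

variable {M X ι : Type*}

lemma tsum_subtype_mem_eq_tsum_mul_indicator (w : ι → ℝ≥0∞) (J : ι → Set X) (t : X) :
    ∑' i : {i | t ∈ J i}, w i = ∑' i, w i * (J i).indicator 1 t := by
  classical
  rw [tsum_subtype]
  exact tsum_congr fun i => by simp [Set.indicator_apply]

variable {f : M → X} {E : Set M} {A : ι → Set M} {J : ι → Set X}

lemma levelSet_subset_iUnion_of_mapsTo (hJ : ∀ i, Set.MapsTo f (A i) (J i))
    (hcover : E ⊆ ⋃ i, A i) (t : X) :
    {x ∈ E | f x = t} ⊆ ⋃ i : {i | t ∈ J i}, A i := by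
  rintro x ⟨hxE, rfl⟩
  obtain ⟨i, hxi⟩ := Set.mem_iUnion.1 (hcover hxE)
  exact Set.mem_iUnion.2 ⟨⟨i, hJ i hxi⟩, hxi⟩

theorem content_levelSet_le_levelFunction_general [MetricSpace M] [Countable ι] {β : ℝ}
    (hβ : 0 < β) (hJ : ∀ i, Set.MapsTo f (A i) (J i)) (hcover : E ⊆ ⋃ i, A i) :
    (∀ t : X, hausdorffContent β {x ∈ E | f x = t} ≤
        ∑' i, Metric.ediam (A i) ^ β * (J i).indicator 1 t) ∧
      (∀ ε : ℝ, 0 < ε → (∀ i, Metric.ediam (A i) < ENNReal.ofReal ε) →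
        ∀ t : X, hausdorffPre β ε {x ∈ E | f x = t} ≤
          ∑' i, Metric.ediam (A i) ^ β * (J i).indicator 1 t) := by
  simp only [← tsum_subtype_mem_eq_tsum_mul_indicator]
  have hlevel := levelSet_subset_iUnion_of_mapsTo hJ hcover
  exact ⟨fun t => hausdorffContent_le_tsum hβ (hlevel t),
    fun ε hε hdiam t => hausdorffPre_le_tsum hβ hε (hlevel t) fun i => hdiam i⟩

end LevelSet

/-- with `h(t) = ∑ n, (diam (A n))^(α-1) * χ_{I(A n)}(t)` for an at most
countable cover `A` of `E` by nonempty bounded sets, one has `μ^(α-1)(E_t) ≤ h(t)` for every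
`t`, where `E_t = {x ∈ E : f x = t}`; moreover, if every `A n` has diameter less than `ε`,
then `ℋ^(α-1)_ε(E_t) ≤ h(t)` for every `t`. -/
theorem content_levelSet_le_levelFunction {M : Type*} [MetricSpace M]
    (C : ℝ) (hC : 0 < C) (f : M → ℝ) (hf : ∀ x y : M, |f x - f y| ≤ C * dist x y)
    (α : ℝ) (hα : 1 < α) (E : Set M) (A : ℕ → Set M)
    (hne : ∀ n, (A n).Nonempty) (hbd : ∀ n, Bornology.IsBounded (A n))
    (hcover : E ⊆ ⋃ n, A n) :
    (∀ t : ℝ, hausdorffContent (α - 1) {x ∈ E | f x = t} ≤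
        ∑' n, EMetric.diam (A n) ^ (α - 1) *
          (Set.Icc (sInf (f '' A n)) (sSup (f '' A n))).indicator 1 t) ∧
      (∀ ε : ℝ, 0 < ε → (∀ n, EMetric.diam (A n) < ENNReal.ofReal ε) →
        ∀ t : ℝ, hausdorffPre (α - 1) ε {x ∈ E | f x = t} ≤
          ∑' n, EMetric.diam (A n) ^ (α - 1) *
            (Set.Icc (sInf (f '' A n)) (sSup (f '' A n))).indicator 1 t) := by
  have hJ (n : ℕ) : Set.MapsTo f (A n) (Set.Icc (sInf (f '' A n)) (sSup (f '' A n))) :=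
    Set.mapsTo_iff_image_subset.2
      ((LipschitzWith.of_dist_le' hf).isBounded_image (hbd n)).subset_Icc_sInf_sSup
  exact content_levelSet_le_levelFunction_general (sub_pos.2 hα) hJ hcover
end

section
/- Let (M, d) be a metric space, C > 0, f : M → ℝ a C-Lipschitz function, α > 1, and E ⊆ M with μ^α(E) = 0. Then the set of t ∈ ℝ for which μ^{α−1}(E_t) > 0, where E_t = {x ∈ E : f(x) = t}, has Lebesgue measure zero in ℝ. -/
open ENNReal

/-!
Let `(A n)` be a cover of `E`. The level set of `f` at `t` is covered by those `A n` whose image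
contains `t`, so its content is at most `∑ n, (diam (A n)) ^ (α - 1) * 𝟙_{f(A n)}(t)`. Since
`f(A n)` has length at most `C * diam (A n)`, integrating in `t` bounds the integral of this sum by
`C * ∑ n, (diam (A n)) ^ α`. Optimising over covers gives an Eilenberg-type inequality for the
upper integral of the content of the level sets; when `μ^α(E) = 0`, that content vanishes almost
everywhere. Only the bound on the measure of images enters, so the argument is carried out for maps
into an arbitrary measure space.
-/

section Content

open Filter MeasureTheory Metric Set
open scoped NNReal Topology

lemma volume_image_le_of_lipschitzWith {X : Type*} [PseudoEMetricSpace X] {K : ℝ≥0} {f : X → ℝ}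
    (hf : LipschitzWith K f) (s : Set X) : volume (f '' s) ≤ K * ediam s :=
  (Real.volume_le_diam _).trans (hf.ediam_image_le s)

variable {M Y : Type*} [MetricSpace M] {E : Set M} {α β m : ℝ} {c : ℝ≥0} {f : M → Y}

lemma hausdorffContent_le_tsum_s18 {A : ℕ → Set M} (hA : E ⊆ ⋃ n, A n) :
    hausdorffContent α E ≤ ∑' n, ediam (A n) ^ α :=
  iInf₂_le A hA

lemma exists_seq_cover_tendsto_hausdorffContent (α : ℝ) (E : Set M) :
    ∃ A : ℕ → ℕ → Set M, (∀ k, E ⊆ ⋃ n, A k n) ∧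
      Tendsto (fun k ↦ ∑' n, ediam (A k n) ^ α) atTop (𝓝 (hausdorffContent α E)) := by
  let coverSum : {A : ℕ → Set M // E ⊆ ⋃ n, A n} → ℝ≥0∞ := fun A ↦ ∑' n, ediam (A.1 n) ^ α
  have range_nonempty : (range coverSum).Nonempty :=
    ⟨_, ⟨fun _ ↦ E, subset_iUnion (fun _ : ℕ ↦ E) 0⟩, rfl⟩
  obtain ⟨u, -, hu_tendsto, hu_mem⟩ :=
    exists_seq_tendsto_sInf range_nonempty (OrderBot.bddBelow _)
  choose A hA using hu_mem
  have hu_eq : u = fun k ↦ coverSum (A k) := funext fun k ↦ (hA k).symm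
  have sInf_eq : sInf (range coverSum) = hausdorffContent α E := iInf_subtype
  rw [hu_eq, sInf_eq] at hu_tendsto
  exact ⟨fun k ↦ A k, fun k ↦ (A k).2, hu_tendsto⟩

lemma ediam_inter_fiber_rpow_le_indicator (hβ : 0 < β) {A : Set M} {S : Set Y}
    (hS : f '' (A ∩ E) ⊆ S) (y : Y) :
    ediam (A ∩ {x ∈ E | f x = y}) ^ β ≤ S.indicator (fun _ ↦ ediam A ^ β) y := by
  by_cases hy : y ∈ S
  · rw [indicator_of_mem hy]
    exact ENNReal.rpow_le_rpow (ediam_mono inter_subset_left) hβ.le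
  · have inter_eq_empty : A ∩ {x ∈ E | f x = y} = ∅ := by
      refine eq_empty_of_forall_notMem ?_
      rintro x ⟨hxA, hxE, rfl⟩
      exact hy (hS (mem_image_of_mem f ⟨hxA, hxE⟩))
    rw [inter_eq_empty, ediam_empty, ENNReal.zero_rpow_of_pos hβ]
    exact zero_le

lemma hausdorffContent_fiber_le_tsum_indicator (hβ : 0 < β) {A : ℕ → Set M}
    (hA : E ⊆ ⋃ n, A n) {S : ℕ → Set Y} (hS : ∀ n, f '' (A n ∩ E) ⊆ S n) (y : Y) :
    hausdorffContent β {x ∈ E | f x = y} ≤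
      ∑' n, (S n).indicator (fun _ ↦ ediam (A n) ^ β) y := by
  have fiber_cover : {x ∈ E | f x = y} ⊆ ⋃ n, A n ∩ {x ∈ E | f x = y} := by
    rw [← iUnion_inter]
    exact subset_inter ((sep_subset E _).trans hA) subset_rfl
  exact (hausdorffContent_le_tsum_s18 fiber_cover).trans
    (ENNReal.tsum_le_tsum fun n ↦ ediam_inter_fiber_rpow_le_indicator hβ (hS n) y)

variable [MeasurableSpace Y] {ν : Measure Y}

lemma exists_measurable_hausdorffContent_fiber_le_of_cover (hβ : 0 < β) (hm : 0 ≤ m)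
    (hν : ∀ A ⊆ E, ν (f '' A) ≤ c * ediam A ^ m) {A : ℕ → Set M} (hA : E ⊆ ⋃ n, A n) :
    ∃ g : Y → ℝ≥0∞, Measurable g ∧ (∀ y, hausdorffContent β {x ∈ E | f x = y} ≤ g y) ∧
      ∫⁻ y, g y ∂ν ≤ c * ∑' n, ediam (A n) ^ (β + m) := by
  let S : ℕ → Set Y := fun n ↦ toMeasurable ν (f '' (A n ∩ E))
  let g : ℕ → Y → ℝ≥0∞ := fun n ↦ (S n).indicator fun _ ↦ ediam (A n) ^ β
  have measurableSet_S (n) : MeasurableSet (S n) := measurableSet_toMeasurable ..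
  have measurable_g (n) : Measurable (g n) := measurable_const.indicator (measurableSet_S n)
  have measure_S_le (n) : ν (S n) ≤ c * ediam (A n) ^ m := by
    calc ν (S n) = ν (f '' (A n ∩ E)) := measure_toMeasurable _
      _ ≤ c * ediam (A n ∩ E) ^ m := hν _ inter_subset_right
      _ ≤ c * ediam (A n) ^ m := by gcongr; exact inter_subset_left
  refine ⟨fun y ↦ ∑' n, g n y, .tsum measurable_g,
    hausdorffContent_fiber_le_tsum_indicator hβ hA fun n ↦ subset_toMeasurable .., ?_⟩
  calc ∫⁻ y, ∑' n, g n y ∂ν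
      = ∑' n, ∫⁻ y, g n y ∂ν := lintegral_tsum fun n ↦ (measurable_g n).aemeasurable
    _ = ∑' n, ediam (A n) ^ β * ν (S n) :=
        tsum_congr fun n ↦ lintegral_indicator_const (measurableSet_S n) _
    _ ≤ ∑' n, ediam (A n) ^ β * (c * ediam (A n) ^ m) := by gcongr; exact measure_S_le _
    _ = ∑' n, c * ediam (A n) ^ (β + m) := by
        simp_rw [ENNReal.rpow_add_of_nonneg _ _ hβ.le hm, mul_left_comm]
    _ = c * ∑' n, ediam (A n) ^ (β + m) := ENNReal.tsum_mul_left

/-- Eilenberg's inequality for Hausdorff content. The measurable majorant `g` makes it a bound on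
the upper integral: `y ↦ hausdorffContent β {x ∈ E | f x = y}` need not be measurable, and Mathlib's
`∫⁻` of a non-measurable function is only a lower integral. -/
lemma exists_measurable_hausdorffContent_fiber_le (hβ : 0 < β) (hm : 0 ≤ m)
    (hν : ∀ A ⊆ E, ν (f '' A) ≤ c * ediam A ^ m) :
    ∃ g : Y → ℝ≥0∞, Measurable g ∧ (∀ y, hausdorffContent β {x ∈ E | f x = y} ≤ g y) ∧
      ∫⁻ y, g y ∂ν ≤ c * hausdorffContent (β + m) E := by
  obtain ⟨A, hA_cover, hA_tendsto⟩ := exists_seq_cover_tendsto_hausdorffContent (β + m) E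
  choose g hg_meas hg_ge hg_int using fun k ↦
    exists_measurable_hausdorffContent_fiber_le_of_cover hβ hm hν (hA_cover k)
  refine ⟨fun y ↦ ⨅ k, g k y, .iInf hg_meas, fun y ↦ le_iInf fun k ↦ hg_ge k y, ?_⟩
  refine ge_of_tendsto' (ENNReal.Tendsto.const_mul hA_tendsto (.inr ENNReal.coe_ne_top))
    fun k ↦ ?_
  exact (lintegral_mono fun y ↦ iInf_le (g · y) k).trans (hg_int k)

theorem volume_levelSet_positive_content_eq_zero_general (hβ : 0 < β) (hm : 0 ≤ m)
    (hν : ∀ A ⊆ E, ν (f '' A) ≤ c * ediam A ^ m) (hE : hausdorffContent (β + m) E = 0) :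
    ν {y | 0 < hausdorffContent β {x ∈ E | f x = y}} = 0 := by
  obtain ⟨g, hg_meas, hg_ge, hg_int⟩ := exists_measurable_hausdorffContent_fiber_le hβ hm hν
  have lintegral_g_eq_zero : ∫⁻ y, g y ∂ν = 0 := by simpa [hE] using hg_int
  have g_ae_eq_zero : g =ᵐ[ν] 0 := (lintegral_eq_zero_iff hg_meas).1 lintegral_g_eq_zero
  exact measure_mono_null (fun y hy ↦ (hy.trans_le (hg_ge y)).ne') g_ae_eq_zero

end Content

/-- if `f : M → ℝ` is `C`-Lipschitz, `α > 1`, and `μ^α(E) = 0`, then the set of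
`t ∈ ℝ` with `μ^(α-1)({x ∈ E : f x = t}) > 0` has Lebesgue measure zero. -/
theorem volume_levelSet_positive_content_eq_zero {M : Type*} [MetricSpace M]
    (C : ℝ) (hC : 0 < C) (f : M → ℝ) (hf : ∀ x y : M, |f x - f y| ≤ C * dist x y)
    (α : ℝ) (hα : 1 < α) (E : Set M) (hE : hausdorffContent α E = 0) :
    MeasureTheory.volume {t : ℝ | 0 < hausdorffContent (α - 1) {x ∈ E | f x = t}} = 0 := by
  have hf_lip : LipschitzWith C.toNNReal f :=
    .of_dist_le_mul fun x y ↦ by simpa only [Real.dist_eq, Real.coe_toNNReal C hC.le] using hf x y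
  exact volume_levelSet_positive_content_eq_zero_general (m := 1) (sub_pos.2 hα) zero_le_one
    (fun A _ ↦ by simpa only [ENNReal.rpow_one] using volume_image_le_of_lipschitzWith hf_lip A)
    (by rwa [sub_add_cancel])
end

section
/- Let (M, d) be a metric space, C > 0, f : M → ℝ a C-Lipschitz function, α > 1, and E ⊆ M with ℋ^α(E) < ∞. Then there is a nonnegative measurable function ψ on ℝ such that ℋ^{α−1}(E_t) ≤ ψ(t) for every t ∈ ℝ, where E_t = {x ∈ E : f(x) = t}, and ∫_ℝ ψ(t) dt ≤ C · ℋ^α(E). -/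
open ENNReal

/-- The `α`-dimensional Hausdorff measure `ℋ^α(E)`: the supremum of `ℋ^α_ε(E)` over `ε > 0`. -/
noncomputable def hausdorffMeas {M : Type*} [MetricSpace M] (α : ℝ) (E : Set M) : ℝ≥0∞ :=
  ⨆ (ε : ℝ) (_ : 0 < ε), hausdorffPre α ε E

/-!
Cover `E` by sets `A n` of diameter less than `ε` with `∑ (diam A n) ^ α` close to `ℋ^α_ε(E)`. Those
`A n` that meet `f ⁻¹' {t}` cover the level set `E_t`, so `ℋ^(α-β)_ε(E_t)` is at most
`∑ (diam A n) ^ (α-β)` over these `n`. Integrating in `t`, the `n`-th summand is weighted by the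
measure of `f '' A n`, which is at most a constant times `(diam A n) ^ β` when the measure of a set
is controlled by the power `β` of its diameter (`β = 1` on the real line). Fatou's lemma along
`ε → 0` concludes. Closures of the images `f '' A n` serve to make the bounds measurable.
-/

open MeasureTheory Filter Set Metric
open scoped NNReal Topology

section Hausdorff

variable {M : Type*} [MetricSpace M] {α ε δ : ℝ} {E : Set M}

theorem hausdorffPre_le_tsum_s19 {A : ℕ → Set M} (hcov : E ⊆ ⋃ n, A n)
    (hdiam : ∀ n, ediam (A n) < ENNReal.ofReal ε) :
    hausdorffPre α ε E ≤ ∑' n, ediam (A n) ^ α :=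
  iInf₂_le_of_le A hcov (iInf_le _ hdiam)

theorem exists_cover_tsum_lt_of_hausdorffPre_lt {a : ℝ≥0∞} (h : hausdorffPre α ε E < a) :
    ∃ A : ℕ → Set M, E ⊆ ⋃ n, A n ∧ (∀ n, ediam (A n) < ENNReal.ofReal ε) ∧
      ∑' n, ediam (A n) ^ α < a := by
  simp only [hausdorffPre, iInf_lt_iff, exists_prop] at h
  exact h

theorem exists_cover_subset_tsum_lt_of_hausdorffPre_lt (hα : 0 ≤ α) {a : ℝ≥0∞}
    (h : hausdorffPre α ε E < a) :
    ∃ A : ℕ → Set M, (∀ n, A n ⊆ E) ∧ E ⊆ ⋃ n, A n ∧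
      (∀ n, ediam (A n) < ENNReal.ofReal ε) ∧ ∑' n, ediam (A n) ^ α < a := by
  obtain ⟨A, hcov, hdiam, hsum⟩ := exists_cover_tsum_lt_of_hausdorffPre_lt h
  have hmono (n : ℕ) : ediam (E ∩ A n) ≤ ediam (A n) := ediam_mono inter_subset_right
  refine ⟨fun n ↦ E ∩ A n, fun n ↦ inter_subset_left, ?_, fun n ↦ (hmono n).trans_lt (hdiam n), ?_⟩
  · rw [← inter_iUnion]
    exact subset_inter subset_rfl hcov
  · exact (ENNReal.tsum_le_tsum fun n ↦ ENNReal.rpow_le_rpow (hmono n) hα).trans_lt hsum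

theorem hausdorffPre_anti (h : δ ≤ ε) : hausdorffPre α ε E ≤ hausdorffPre α δ E :=
  le_iInf₂ fun _ hcov ↦ le_iInf fun hdiam ↦
    hausdorffPre_le_tsum_s19 hcov fun n ↦ (hdiam n).trans_le (ENNReal.ofReal_le_ofReal h)

theorem hausdorffPre_empty (hα : 0 < α) (hε : 0 < ε) : hausdorffPre α ε (∅ : Set M) = 0 := by
  have hle : hausdorffPre α ε (∅ : Set M) ≤ ∑' _ : ℕ, ediam (∅ : Set M) ^ α :=
    hausdorffPre_le_tsum_s19 (empty_subset _) fun _ ↦ by simpa using hε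
  simpa [hα] using hle

theorem hausdorffPre_le_hausdorffMeas (hε : 0 < ε) : hausdorffPre α ε E ≤ hausdorffMeas α E :=
  le_iSup₂ (f := fun (ε : ℝ) (_ : 0 < ε) ↦ hausdorffPre α ε E) ε hε

theorem hausdorffMeas_le_liminf {ι : Type*} {l : Filter ι} {ε : ι → ℝ} (hε : Tendsto ε l (𝓝 0))
    {φ : ι → ℝ≥0∞} (hφ : ∀ i, hausdorffPre α (ε i) E ≤ φ i) :
    hausdorffMeas α E ≤ liminf φ l := by
  refine iSup₂_le fun η hη ↦ le_liminf_of_le (by isBoundedDefault) ?_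
  filter_upwards [hε.eventually_le_const hη] with i hi
  exact (hausdorffPre_anti hi).trans (hφ i)

end Hausdorff

section LevelSetSum

variable {X Y : Type*} [PseudoEMetricSpace X] [TopologicalSpace Y]

/-- The sum of `(diam A n) ^ γ` over those members `A n` of a sequence of sets whose image under
`f` has `t` in its closure. If the `A n` cover `E`, it bounds the Hausdorff premeasure of exponent
`γ` of the level set `{x ∈ E | f x = t}`. Taking closures makes it measurable in `t`. -/
noncomputable def levelSetSum (f : X → Y) (A : ℕ → Set X) (γ : ℝ) (t : Y) : ℝ≥0∞ :=
  ∑' n, (closure (f '' A n)).indicator (fun _ ↦ ediam (A n) ^ γ) t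

theorem hausdorffPre_levelSet_le_levelSetSum {M : Type*} [MetricSpace M] {γ ε : ℝ}
    (hγ : 0 < γ) (hε : 0 < ε) {E : Set M} {A : ℕ → Set M} (hcov : E ⊆ ⋃ n, A n)
    (hdiam : ∀ n, ediam (A n) < ENNReal.ofReal ε) (f : M → Y) (t : Y) :
    hausdorffPre γ ε {x ∈ E | f x = t} ≤ levelSetSum f A γ t := by
  classical
  let B (n : ℕ) : Set M := if t ∈ closure (f '' A n) then A n else ∅
  have hBcov : {x ∈ E | f x = t} ⊆ ⋃ n, B n := by
    rintro x ⟨hxE, rfl⟩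
    obtain ⟨n, hn⟩ := mem_iUnion.1 (hcov hxE)
    have hfx : f x ∈ closure (f '' A n) := subset_closure (mem_image_of_mem f hn)
    exact mem_iUnion.2 ⟨n, by simpa only [B, if_pos hfx] using hn⟩
  have hBdiam (n : ℕ) : ediam (B n) < ENNReal.ofReal ε := by
    by_cases h : t ∈ closure (f '' A n)
    · simpa only [B, if_pos h] using hdiam n
    · simpa [B, h] using hε
  have hBsum (n : ℕ) :
      ediam (B n) ^ γ = (closure (f '' A n)).indicator (fun _ ↦ ediam (A n) ^ γ) t := by
    by_cases h : t ∈ closure (f '' A n) <;> simp [B, h, hγ]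
  simpa only [levelSetSum, hBsum] using hausdorffPre_le_tsum_s19 (α := γ) hBcov hBdiam

theorem measurable_levelSetSum [MeasurableSpace Y] [OpensMeasurableSpace Y] (f : X → Y)
    (A : ℕ → Set X) (γ : ℝ) : Measurable (levelSetSum f A γ) :=
  Measurable.tsum fun _ ↦ measurable_const.indicator isClosed_closure.measurableSet

end LevelSetSum

section Integral

variable {X Y : Type*} [PseudoEMetricSpace X] [PseudoEMetricSpace Y] [MeasurableSpace Y]
  {μ : Measure Y} {c K : ℝ≥0} {α β : ℝ} {f : X → Y}

theorem measure_closure_image_le (hβ : 0 ≤ β)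
    (hμ : ∀ S : Set Y, μ S ≤ c * ediam S ^ β) {S : Set X} (hf : LipschitzOnWith K f S) :
    μ (closure (f '' S)) ≤ c * K ^ β * ediam S ^ β := by
  have hdiam : ediam (f '' S) ≤ K * ediam S := ediam_image_le_iff.2 fun x hx y hy ↦
    (hf hx hy).trans (by gcongr; exact edist_le_ediam_of_mem hx hy)
  calc μ (closure (f '' S)) ≤ c * ediam (closure (f '' S)) ^ β := hμ _
    _ ≤ c * (K * ediam S) ^ β := by rw [ediam_closure]; gcongr
    _ = c * K ^ β * ediam S ^ β := by rw [ENNReal.mul_rpow_of_nonneg _ _ hβ, mul_assoc]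

theorem lintegral_levelSetSum_le [OpensMeasurableSpace Y] (hβ : 0 ≤ β) (hβα : β ≤ α)
    (hμ : ∀ S : Set Y, μ S ≤ c * ediam S ^ β) {A : ℕ → Set X}
    (hf : ∀ n, LipschitzOnWith K f (A n)) :
    ∫⁻ t, levelSetSum f A (α - β) t ∂μ ≤ c * K ^ β * ∑' n, ediam (A n) ^ α := by
  calc ∫⁻ t, levelSetSum f A (α - β) t ∂μ
      = ∑' n, ediam (A n) ^ (α - β) * μ (closure (f '' A n)) := by
        unfold levelSetSum
        rw [lintegral_tsum fun n ↦
          (measurable_const.indicator isClosed_closure.measurableSet).aemeasurable]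
        simp only [lintegral_indicator_const isClosed_closure.measurableSet]
    _ ≤ ∑' n, ediam (A n) ^ (α - β) * (c * K ^ β * ediam (A n) ^ β) := by
        gcongr with n
        exact measure_closure_image_le hβ hμ (hf n)
    _ = ∑' n, c * K ^ β * ediam (A n) ^ α := by
        congr! 2 with n
        rw [mul_left_comm, ← ENNReal.rpow_add_of_nonneg _ _ (sub_nonneg.2 hβα) hβ, sub_add_cancel]
    _ = c * K ^ β * ∑' n, ediam (A n) ^ α := ENNReal.tsum_mul_left

end Integral

section LevelSets

variable {M Y : Type*} [MetricSpace M] [PseudoEMetricSpace Y] [MeasurableSpace Y]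
  [OpensMeasurableSpace Y] {μ : Measure Y} {c K : ℝ≥0} {α β ε : ℝ} {f : M → Y} {E : Set M}

theorem exists_measurable_hausdorffPre_levelSet_le_of_eq_top (hβ : 0 ≤ β) (hβα : β < α)
    (hμ : ∀ S : Set Y, μ S ≤ c * ediam S ^ β) (hf : LipschitzOnWith K f E) (hε : 0 < ε)
    (hE : hausdorffPre α ε E = ⊤) :
    ∃ φ : Y → ℝ≥0∞, Measurable φ ∧
      (∀ t, hausdorffPre (α - β) ε {x ∈ E | f x = t} ≤ φ t) ∧
      ∫⁻ t, φ t ∂μ ≤ c * K ^ β * hausdorffPre α ε E := by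
  -- The constant `⊤` would not do: the right-hand side is `0` if `c * K ^ β = 0`.
  refine ⟨(closure (f '' E)).indicator fun _ ↦ ⊤,
    measurable_const.indicator isClosed_closure.measurableSet, fun t ↦ ?_, ?_⟩
  · by_cases ht : t ∈ closure (f '' E)
    · simp only [indicator_of_mem ht, le_top]
    · have hempty : {x ∈ E | f x = t} = ∅ := eq_empty_of_forall_notMem fun x hx ↦
        ht (subset_closure ⟨x, hx⟩)
      rw [hempty, hausdorffPre_empty (sub_pos.2 hβα) hε]
      exact zero_le
  · calc ∫⁻ t, (closure (f '' E)).indicator (fun _ ↦ ⊤) t ∂μ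
        = ⊤ * μ (closure (f '' E)) := lintegral_indicator_const isClosed_closure.measurableSet ⊤
      _ ≤ ⊤ * (c * K ^ β * ediam E ^ β) := by gcongr; exact measure_closure_image_le hβ hμ hf
      _ = c * K ^ β * (⊤ * ediam E ^ β) := mul_left_comm ..
      _ ≤ c * K ^ β * hausdorffPre α ε E := by rw [hE]; gcongr; exact le_top

theorem exists_measurable_hausdorffPre_levelSet_le (hβ : 0 ≤ β) (hβα : β < α)
    (hμ : ∀ S : Set Y, μ S ≤ c * ediam S ^ β) (hf : LipschitzOnWith K f E) (hε : 0 < ε)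
    {δ : ℝ≥0∞} (hδ : δ ≠ 0) :
    ∃ φ : Y → ℝ≥0∞, Measurable φ ∧
      (∀ t, hausdorffPre (α - β) ε {x ∈ E | f x = t} ≤ φ t) ∧
      ∫⁻ t, φ t ∂μ ≤ c * K ^ β * (hausdorffPre α ε E + δ) := by
  by_cases hE : hausdorffPre α ε E = ⊤
  · simpa only [hE, top_add] using
      exists_measurable_hausdorffPre_levelSet_le_of_eq_top hβ hβα hμ hf hε hE
  obtain ⟨A, hAE, hcov, hdiam, hsum⟩ := exists_cover_subset_tsum_lt_of_hausdorffPre_lt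
    (hβ.trans hβα.le) (ENNReal.lt_add_right hE hδ)
  refine ⟨levelSetSum f A (α - β), measurable_levelSetSum f A _,
    hausdorffPre_levelSet_le_levelSetSum (sub_pos.2 hβα) hε hcov hdiam f, ?_⟩
  calc ∫⁻ t, levelSetSum f A (α - β) t ∂μ ≤ c * K ^ β * ∑' n, ediam (A n) ^ α :=
        lintegral_levelSetSum_le hβ hβα.le hμ fun n ↦ hf.mono (hAE n)
    _ ≤ c * K ^ β * (hausdorffPre α ε E + δ) := by gcongr

theorem exists_measurable_bound_on_levelSets_general (hβ : 0 ≤ β) (hβα : β < α)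
    (hμ : ∀ S : Set Y, μ S ≤ c * ediam S ^ β) (hf : LipschitzOnWith K f E) :
    ∃ ψ : Y → ℝ≥0∞, Measurable ψ ∧
      (∀ t, hausdorffMeas (α - β) {x ∈ E | f x = t} ≤ ψ t) ∧
      ∫⁻ t, ψ t ∂μ ≤ c * K ^ β * hausdorffMeas α E := by
  let ε (k : ℕ) : ℝ := 1 / ((k : ℝ) + 1)
  have hε (k : ℕ) : 0 < ε k := Nat.one_div_pos_of_nat
  have hε_lim : Tendsto ε atTop (𝓝 0) := tendsto_one_div_add_atTop_nhds_zero_nat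
  choose φ hφ_meas hφ_bound hφ_int using fun k ↦ exists_measurable_hausdorffPre_levelSet_le
    hβ hβα hμ hf (hε k) (ENNReal.ofReal_pos.2 (hε k)).ne'
  refine ⟨fun t ↦ liminf (fun k ↦ φ k t) atTop, .liminf hφ_meas,
    fun t ↦ hausdorffMeas_le_liminf hε_lim fun k ↦ hφ_bound k t, ?_⟩
  have hconst : (c * K ^ β : ℝ≥0∞) ≠ ⊤ :=
    ENNReal.mul_ne_top ENNReal.coe_ne_top (ENNReal.rpow_ne_top_of_nonneg hβ ENNReal.coe_ne_top)
  have hlim : Tendsto (fun k ↦ c * K ^ β * (hausdorffMeas α E + ENNReal.ofReal (ε k))) atTop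
      (𝓝 (c * K ^ β * hausdorffMeas α E)) := by
    refine ENNReal.Tendsto.const_mul ?_ (.inr hconst)
    simpa using tendsto_const_nhds.add (ENNReal.tendsto_ofReal hε_lim)
  calc ∫⁻ t, liminf (fun k ↦ φ k t) atTop ∂μ
      ≤ liminf (fun k ↦ ∫⁻ t, φ k t ∂μ) atTop := lintegral_liminf_le hφ_meas
    _ ≤ liminf (fun k ↦ c * K ^ β * (hausdorffMeas α E + ENNReal.ofReal (ε k))) atTop :=
        liminf_le_liminf <| .of_forall fun k ↦ (hφ_int k).trans <| by
          gcongr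
          exact hausdorffPre_le_hausdorffMeas (hε k)
    _ = c * K ^ β * hausdorffMeas α E := hlim.liminf_eq

end LevelSets

/-- if `f : M → ℝ` is `C`-Lipschitz, `α > 1`, and `ℋ^α(E) < ∞`, then there is a
nonnegative measurable function `ψ` on `ℝ` with `ℋ^(α-1)(E_t) ≤ ψ(t)` for every `t` and
`∫ ψ ≤ C * ℋ^α(E)`. -/
theorem exists_measurable_bound_on_levelSets {M : Type*} [MetricSpace M]
    (C : ℝ) (hC : 0 < C) (f : M → ℝ) (hf : ∀ x y : M, |f x - f y| ≤ C * dist x y)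
    (α : ℝ) (hα : 1 < α) (E : Set M) (hE : hausdorffMeas α E < ⊤) :
    ∃ ψ : ℝ → ℝ≥0∞, Measurable ψ ∧
      (∀ t : ℝ, hausdorffMeas (α - 1) {x ∈ E | f x = t} ≤ ψ t) ∧
      ∫⁻ t, ψ t ≤ ENNReal.ofReal C * hausdorffMeas α E := by
  have hLip : LipschitzWith C.toNNReal f :=
    .of_dist_le_mul fun x y ↦ (hf x y).trans_eq (by rw [Real.coe_toNNReal C hC.le])
  simpa [ENNReal.ofReal] using exists_measurable_bound_on_levelSets_general (c := 1) zero_le_one hα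
    (fun S ↦ by simpa using Real.volume_le_diam S) (hLip.lipschitzOnWith (s := E))
end
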